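/- arXiv:2507.02077 — 2 statements merged into one kernel-verified Lean document; each statement's English description precedes it below -/
import Mathlib

section
/- At every point of U, a ( (∂₁a)(∂₁T) + (∂₂a)(∂₂T) ) = −(∂₂a)(∂₁R) + (∂₁a)(∂₂R). -/
/-- Partial derivative in direction `i` of a function on `ℝ²`. -/
noncomputable def pd (i : Fin 2) (f : EuclideanSpace ℝ (Fin 2) → ℝ)
    (x : EuclideanSpace ℝ (Fin 2)) : ℝ :=
  fderiv ℝ f x (EuclideanSpace.single i 1)

theorem pd_mul_aux (i : Fin 2) (f g : EuclideanSpace ℝ (Fin 2) → ℝ)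
    (x : EuclideanSpace ℝ (Fin 2)) (hf : DifferentiableAt ℝ f x) (hg : DifferentiableAt ℝ g x) :
    pd i (fun y => f y * g y) x = f x * pd i g x + pd i f x * g x := by
  unfold pd
  rw [fderiv_fun_mul hf hg]
  simp
  ring

theorem pd_add_aux (i : Fin 2) (f g : EuclideanSpace ℝ (Fin 2) → ℝ)
    (x : EuclideanSpace ℝ (Fin 2)) (hf : DifferentiableAt ℝ f x) (hg : DifferentiableAt ℝ g x) :
    pd i (fun y => f y + g y) x = pd i f x + pd i g x := by
  unfold pd
  rw [fderiv_fun_add hf hg]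
  simp

theorem pd_neg_aux (i : Fin 2) (f : EuclideanSpace ℝ (Fin 2) → ℝ)
    (x : EuclideanSpace ℝ (Fin 2)) :
    pd i (fun y => - f y) x = - pd i f x := by
  unfold pd
  rw [fderiv_fun_neg]
  simp

theorem pd_coord_aux (i j : Fin 2) (x : EuclideanSpace ℝ (Fin 2)) :
    pd i (fun y => y j) x = if j = i then 1 else 0 := by
  unfold pd
  have h : HasFDerivAt (fun y : EuclideanSpace ℝ (Fin 2) => y j)
      (EuclideanSpace.proj j : EuclideanSpace ℝ (Fin 2) →L[ℝ] ℝ) x :=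
    (EuclideanSpace.proj j : EuclideanSpace ℝ (Fin 2) →L[ℝ] ℝ).hasFDerivAt
  rw [h.fderiv]
  simp

/-- Lemma 3.2, second identity: `a (a₁ T₁ + a₂ T₂) = −a₂ R₁ + a₁ R₂` on `U`. -/
theorem stmt5 (U : Set (EuclideanSpace ℝ (Fin 2))) (hU : IsOpen U)
    (a u : EuclideanSpace ℝ (Fin 2) → ℝ)
    (ha : ContDiffOn ℝ (⊤ : ℕ∞) a U) (hapos : ∀ x ∈ U, 0 < a x)
    (hrad : ∀ x ∈ U, -(x 1) * pd 0 a x + x 0 * pd 1 a x = 0)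
    (hu : ContDiffOn ℝ (⊤ : ℕ∞) u U)
    (heq : ∀ x ∈ U, a x * (pd 0 (pd 0 u) x + pd 1 (pd 1 u) x)
      + (pd 0 a x * pd 0 u x + pd 1 a x * pd 1 u x) = 0)
    (T R : EuclideanSpace ℝ (Fin 2) → ℝ)
    (hT : ∀ x, T x = -(x 1) * pd 0 u x + x 0 * pd 1 u x)
    (hR : ∀ x, R x = a x * (x 0 * pd 0 u x + x 1 * pd 1 u x)) :
    ∀ x ∈ U, a x * (pd 0 a x * pd 0 T x + pd 1 a x * pd 1 T x)
      = -(pd 1 a x) * pd 0 R x + pd 0 a x * pd 1 R x := by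
  intro x hx
  have hxU : U ∈ nhds x := hU.mem_nhds hx
  have hax : DifferentiableAt ℝ a x := (ha.contDiffAt hxU).differentiableAt (by simp)
  have h2 : (2 : WithTop ℕ∞) ≤ ((⊤ : ℕ∞) : WithTop ℕ∞) := by
    exact WithTop.coe_le_coe.2 (le_top : (2 : ℕ∞) ≤ ⊤)
  have hux := hu.contDiffAt hxU
  have hfd : DifferentiableAt ℝ (fderiv ℝ u) x :=
    (hux.fderiv_right (m := 1) (by rw [one_add_one_eq_two]; exact h2)).differentiableAt (by simp)
  have hp : ∀ j, DifferentiableAt ℝ (pd j u) x := fun j =>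
    hfd.clm_apply (differentiableAt_const _)
  have hc : ∀ j : Fin 2, DifferentiableAt ℝ (fun y : EuclideanSpace ℝ (Fin 2) => y j) x :=
    fun j => (EuclideanSpace.proj j : EuclideanSpace ℝ (Fin 2) →L[ℝ] ℝ).differentiableAt
  have hpp : ∀ i j, pd i (pd j u) x = fderiv ℝ (fderiv ℝ u) x (EuclideanSpace.single i 1)
      (EuclideanSpace.single j 1) := by
    intro i j
    have h := (hfd.hasFDerivAt.clm_apply
      (hasFDerivAt_const (EuclideanSpace.single j (1 : ℝ)) x)).fderiv
    change fderiv ℝ (fun y => fderiv ℝ u y (EuclideanSpace.single j 1)) x _ = _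
    rw [h]
    simp
  have hsymm : pd 0 (pd 1 u) x = pd 1 (pd 0 u) x := by
    rw [hpp, hpp]
    exact (hux.isSymmSndFDerivAt (by simpa using h2)) _ _
  have hT' : ∀ i, pd i T x = -(x 1 * pd i (pd 0 u) x + (if (1 : Fin 2) = i then 1 else 0) * pd 0 u x)
      + (x 0 * pd i (pd 1 u) x + (if (0 : Fin 2) = i then 1 else 0) * pd 1 u x) := by
    intro i
    have e : T = fun y => (-(y 1 * pd 0 u y)) + y 0 * pd 1 u y := by
      funext y
      rw [hT]
      ring
    rw [e, pd_add_aux i _ _ x ((hc 1).fun_mul (hp 0)).fun_neg ((hc 0).fun_mul (hp 1)), pd_neg_aux,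
      pd_mul_aux i _ _ x (hc 1) (hp 0), pd_mul_aux i _ _ x (hc 0) (hp 1),
      pd_coord_aux, pd_coord_aux]
  have hR' : ∀ i, pd i R x = a x * ((x 0 * pd i (pd 0 u) x
      + (if (0 : Fin 2) = i then 1 else 0) * pd 0 u x)
      + (x 1 * pd i (pd 1 u) x + (if (1 : Fin 2) = i then 1 else 0) * pd 1 u x))
      + pd i a x * (x 0 * pd 0 u x + x 1 * pd 1 u x) := by
    intro i
    have e : R = fun y => a y * (y 0 * pd 0 u y + y 1 * pd 1 u y) := funext hR
    rw [e, pd_mul_aux i _ _ x hax (((hc 0).fun_mul (hp 0)).fun_add ((hc 1).fun_mul (hp 1))),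
      pd_add_aux i _ _ x ((hc 0).fun_mul (hp 0)) ((hc 1).fun_mul (hp 1)),
      pd_mul_aux i _ _ x (hc 0) (hp 0), pd_mul_aux i _ _ x (hc 1) (hp 1),
      pd_coord_aux, pd_coord_aux]
  have h0 := hrad x hx
  rw [hT', hT', hR', hR', hsymm]
  simp only [if_true, Fin.isValue, zero_ne_one, one_ne_zero, if_false]
  linear_combination (a x * (pd 0 (pd 0 u) x + pd 1 (pd 1 u) x)) * h0
end

section
/- Let α, β ∈ ℝ be not both zero and set v := α T + β R. Then at every point of U, Δv = ((β²a² − α²)/(β²a² + α²)) · (1/a) · ( (∂₁a)(∂₁v) + (∂₂a)(∂₂v) ) + (2αβ/(β²a² + α²)) · ( (∂₂a)(∂₁v) − (∂₁a)(∂₂v) ). -/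
local notation "E2" => EuclideanSpace ℝ (Fin 2)

theorem pd_smooth {U : Set E2} (hU : IsOpen U) {f : E2 → ℝ}
    (hf : ContDiffOn ℝ (⊤ : ℕ∞) f U) (i : Fin 2) : ContDiffOn ℝ (⊤ : ℕ∞) (pd i f) U := by
  have h : ContDiffOn ℝ (⊤ : ℕ∞) (fderiv ℝ f) U :=
    hf.fderiv_of_isOpen hU (by simp)
  exact h.clm_apply contDiffOn_const

theorem sm_diff {U : Set E2} (hU : IsOpen U) {f : E2 → ℝ}
    (hf : ContDiffOn ℝ (⊤ : ℕ∞) f U) {x : E2} (hx : x ∈ U) : DifferentiableAt ℝ f x :=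
  (hf.contDiffAt (hU.mem_nhds hx)).differentiableAt (by simp)

theorem pd_congr {U : Set E2} (hU : IsOpen U) {f g : E2 → ℝ}
    (h : ∀ x ∈ U, f x = g x) (i : Fin 2) {x : E2} (hx : x ∈ U) : pd i f x = pd i g x := by
  have : f =ᶠ[nhds x] g := Filter.eventually_of_mem (hU.mem_nhds hx) h
  simp only [pd, this.fderiv_eq]

theorem pd_comm {U : Set E2} (hU : IsOpen U) {f : E2 → ℝ}
    (hf : ContDiffOn ℝ (⊤ : ℕ∞) f U) {x : E2} (hx : x ∈ U) (i j : Fin 2) :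
    pd i (pd j f) x = pd j (pd i f) x := by
  have hc : ContDiffAt ℝ (⊤ : ℕ∞) f x := hf.contDiffAt (hU.mem_nhds hx)
  have hs : IsSymmSndFDerivAt ℝ f x := hc.isSymmSndFDerivAt (by
    simp only [minSmoothness_of_isRCLikeNormedField]
    exact WithTop.coe_le_coe.2 (le_top : (2 : ℕ∞) ≤ ⊤))
  have h : ContDiffOn ℝ (⊤ : ℕ∞) (fderiv ℝ f) U :=
    hf.fderiv_of_isOpen hU (by simp)
  have hd : DifferentiableAt ℝ (fderiv ℝ f) x :=
    (h.contDiffAt (hU.mem_nhds hx)).differentiableAt (by simp)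
  have key : ∀ i j : Fin 2, pd i (pd j f) x =
      fderiv ℝ (fderiv ℝ f) x (EuclideanSpace.single i 1) (EuclideanSpace.single j 1) := by
    intro i j
    have : HasFDerivAt (pd j f) _ x := hd.hasFDerivAt.clm_apply
      (hasFDerivAt_const (EuclideanSpace.single j (1:ℝ)) x)
    rw [pd, this.fderiv]
    simp
  rw [key, key]
  exact hs _ _

theorem pd_add {f g : E2 → ℝ} {x : E2} (hf : DifferentiableAt ℝ f x)
    (hg : DifferentiableAt ℝ g x) (i : Fin 2) :
    pd i (fun y => f y + g y) x = pd i f x + pd i g x := by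
  simp only [pd]
  rw [fderiv_fun_add hf hg]; simp

theorem pd_neg {f : E2 → ℝ} {x : E2} (i : Fin 2) :
    pd i (fun y => - f y) x = - pd i f x := by
  simp only [pd]
  rw [fderiv_fun_neg]; simp

theorem pd_mul {f g : E2 → ℝ} {x : E2} (hf : DifferentiableAt ℝ f x)
    (hg : DifferentiableAt ℝ g x) (i : Fin 2) :
    pd i (fun y => f y * g y) x = pd i f x * g x + f x * pd i g x := by
  simp only [pd]
  rw [fderiv_fun_mul hf hg]; simp; ring

theorem pd_const_mul {f : E2 → ℝ} {x : E2} (c : ℝ) (hf : DifferentiableAt ℝ f x) (i : Fin 2) :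
    pd i (fun y => c * f y) x = c * pd i f x := by
  simp only [pd]
  rw [fderiv_const_mul hf]; simp

theorem pd_coord (x : E2) (i j : Fin 2) :
    pd i (fun y : E2 => y j) x = if j = i then 1 else 0 := by
  have : HasFDerivAt (fun y : E2 => y j) (EuclideanSpace.proj j : E2 →L[ℝ] ℝ) x :=
    (EuclideanSpace.proj j : E2 →L[ℝ] ℝ).hasFDerivAt
  simp only [pd]
  rw [this.fderiv]
  simp

/-- Lemma 3.3: the equation satisfied by the linear combination `v = αT + βR`. -/
theorem stmt6 (U : Set (EuclideanSpace ℝ (Fin 2))) (hU : IsOpen U)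
    (a u : EuclideanSpace ℝ (Fin 2) → ℝ)
    (ha : ContDiffOn ℝ (⊤ : ℕ∞) a U) (hapos : ∀ x ∈ U, 0 < a x)
    (hrad : ∀ x ∈ U, -(x 1) * pd 0 a x + x 0 * pd 1 a x = 0)
    (hu : ContDiffOn ℝ (⊤ : ℕ∞) u U)
    (heq : ∀ x ∈ U, a x * (pd 0 (pd 0 u) x + pd 1 (pd 1 u) x)
      + (pd 0 a x * pd 0 u x + pd 1 a x * pd 1 u x) = 0)
    (T R : EuclideanSpace ℝ (Fin 2) → ℝ)
    (hT : ∀ x, T x = -(x 1) * pd 0 u x + x 0 * pd 1 u x)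
    (hR : ∀ x, R x = a x * (x 0 * pd 0 u x + x 1 * pd 1 u x))
    (α β : ℝ) (hαβ : (α, β) ≠ (0, 0))
    (v : EuclideanSpace ℝ (Fin 2) → ℝ)
    (hv : ∀ x, v x = α * T x + β * R x) :
    ∀ x ∈ U, pd 0 (pd 0 v) x + pd 1 (pd 1 v) x
      = ((β ^ 2 * (a x) ^ 2 - α ^ 2) / (β ^ 2 * (a x) ^ 2 + α ^ 2)) * (1 / a x)
          * (pd 0 a x * pd 0 v x + pd 1 a x * pd 1 v x)
        + (2 * α * β / (β ^ 2 * (a x) ^ 2 + α ^ 2))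
          * (pd 1 a x * pd 0 v x - pd 0 a x * pd 1 v x) := by
  have hx0 : ∀ j : Fin 2, ContDiffOn ℝ (⊤ : ℕ∞) (fun y : E2 => y j) U := fun j =>
    (EuclideanSpace.proj j : E2 →L[ℝ] ℝ).contDiff.contDiffOn
  have hdx : ∀ (j : Fin 2) (x : E2), DifferentiableAt ℝ (fun y : E2 => y j) x := fun j x =>
    (EuclideanSpace.proj j : E2 →L[ℝ] ℝ).differentiableAt
  have hu' := pd_smooth hU hu
  obtain rfl : T = fun x => -(x 1) * pd 0 u x + x 0 * pd 1 u x := funext hT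
  obtain rfl : R = fun x => a x * (x 0 * pd 0 u x + x 1 * pd 1 u x) := funext hR
  obtain rfl := funext hv
  clear hT hR hv
  have sT : ContDiffOn ℝ (⊤ : ℕ∞) (fun x : E2 => -(x 1) * pd 0 u x + x 0 * pd 1 u x) U :=
    ((hx0 1).neg.mul (hu' 0)).add ((hx0 0).mul (hu' 1))
  have sR : ContDiffOn ℝ (⊤ : ℕ∞) (fun x : E2 => a x * (x 0 * pd 0 u x + x 1 * pd 1 u x)) U :=
    ha.mul (((hx0 0).mul (hu' 0)).add ((hx0 1).mul (hu' 1)))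
  have gT : ∀ i, ∀ x ∈ U, pd i (fun x : E2 => -(x 1) * pd 0 u x + x 0 * pd 1 u x) x
      = -(if (1 : Fin 2) = i then 1 else 0) * pd 0 u x + -(x 1) * pd i (pd 0 u) x
        + ((if (0 : Fin 2) = i then 1 else 0) * pd 1 u x + x 0 * pd i (pd 1 u) x) := by
    intro i x hx
    have d0 := sm_diff hU (hu' 0) hx
    have d1 := sm_diff hU (hu' 1) hx
    rw [pd_add ((hdx 1 x).fun_neg.fun_mul d0) ((hdx 0 x).fun_mul d1), pd_mul (hdx 1 x).fun_neg d0,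
      pd_mul (hdx 0 x) d1, pd_neg, pd_coord, pd_coord]
  have gR : ∀ i, ∀ x ∈ U, pd i (fun x : E2 => a x * (x 0 * pd 0 u x + x 1 * pd 1 u x)) x
      = pd i a x * (x 0 * pd 0 u x + x 1 * pd 1 u x) + a x * (
        (if (0 : Fin 2) = i then 1 else 0) * pd 0 u x + x 0 * pd i (pd 0 u) x
        + ((if (1 : Fin 2) = i then 1 else 0) * pd 1 u x + x 1 * pd i (pd 1 u) x)) := by
    intro i x hx
    have d0 := sm_diff hU (hu' 0) hx
    have d1 := sm_diff hU (hu' 1) hx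
    rw [pd_mul (sm_diff hU ha hx) (((hdx 0 x).fun_mul d0).fun_add ((hdx 1 x).fun_mul d1)),
      pd_add ((hdx 0 x).fun_mul d0) ((hdx 1 x).fun_mul d1), pd_mul (hdx 0 x) d0,
      pd_mul (hdx 1 x) d1, pd_coord, pd_coord]
  generalize hTe : (fun x : E2 => -(x 1) * pd 0 u x + x 0 * pd 1 u x) = T at *
  generalize hRe : (fun x : E2 => a x * (x 0 * pd 0 u x + x 1 * pd 1 u x)) = R at *
  have c1 : ∀ x ∈ U, pd 0 R x = - (a x * pd 1 T x) := by
    intro x hx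
    rw [gT 1 x hx, gR 0 x hx, pd_comm hU hu hx 1 0]
    simp only [reduceIte, Fin.isValue, one_ne_zero, zero_ne_one]
    linear_combination x 0 * heq x hx - pd 1 u x * hrad x hx
  have c2 : ∀ x ∈ U, pd 1 R x = a x * pd 0 T x := by
    intro x hx
    rw [gT 0 x hx, gR 1 x hx, pd_comm hU hu hx 1 0]
    simp only [reduceIte, Fin.isValue, one_ne_zero, zero_ne_one]
    linear_combination x 1 * heq x hx + pd 0 u x * hrad x hx
  have sT' := pd_smooth hU sT
  have sR' := pd_smooth hU sR
  have gv : ∀ i, ∀ x ∈ U, pd i (fun x => α * T x + β * R x) x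
      = α * pd i T x + β * pd i R x := by
    intro i x hx
    have dT := sm_diff hU sT hx
    have dR := sm_diff hU sR hx
    rw [pd_add (dT.const_mul α) (dR.const_mul β), pd_const_mul _ dT, pd_const_mul _ dR]
  have gvv : ∀ i, ∀ x ∈ U, pd i (pd i (fun x => α * T x + β * R x)) x
      = α * pd i (pd i T) x + β * pd i (pd i R) x := by
    intro i x hx
    have dT := sm_diff hU (sT' i) hx
    have dR := sm_diff hU (sR' i) hx
    rw [pd_congr hU (gv i) i hx, pd_add (dT.const_mul α) (dR.const_mul β),
      pd_const_mul _ dT, pd_const_mul _ dR]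
  intro x hx
  have da := sm_diff hU ha hx
  have e1 : ∀ i, pd i (pd 0 R) x = - (pd i a x * pd 1 T x + a x * pd i (pd 1 T) x) := by
    intro i
    rw [pd_congr hU c1 i hx, pd_neg, pd_mul da (sm_diff hU (sT' 1) hx)]
  have e2 : ∀ i, pd i (pd 1 R) x = pd i a x * pd 0 T x + a x * pd i (pd 0 T) x := by
    intro i
    rw [pd_congr hU c2 i hx, pd_mul da (sm_diff hU (sT' 0) hx)]
  have hT2 := pd_comm hU sT hx 0 1
  have hR2 := pd_comm hU sR hx 0 1
  have hap := hapos x hx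
  rw [e2 0, e1 1] at hR2
  have hne : β ^ 2 * (a x) ^ 2 + α ^ 2 ≠ 0 := by
    intro h
    have h1 : α = 0 := by nlinarith [sq_nonneg (β * a x), sq_nonneg α]
    subst h1
    have h2 : β = 0 := by
      have : (β * a x) ^ 2 = 0 := by linarith [mul_pow β (a x) 2]
      have := pow_eq_zero_iff (two_ne_zero) |>.1 this
      exact (mul_eq_zero.1 this).resolve_right hap.ne'
    exact hαβ (by simp [h2])
  have hL : pd 0 (pd 0 T) x + pd 1 (pd 1 T) x
      = -(pd 0 a x * pd 0 T x + pd 1 a x * pd 1 T x) / a x := by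
    field_simp
    linarith
  rw [gvv 0 x hx, gvv 1 x hx, gv 0 x hx, gv 1 x hx, e1 0, e2 1, c1 x hx, c2 x hx, hT2]
  rw [show ∀ p q r s : ℝ, α * p + β * r + (α * q + β * s) = α * (p + q) + β * (r + s) by
    intros; ring, hL]
  generalize hD : β ^ 2 * (a x) ^ 2 + α ^ 2 = D at hne ⊢
  have hane := hap.ne'
  field_simp
  rw [← hD]
  ring
end
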